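/- Let ξ be a centered Gaussian random vector in ℝ^d with covariance matrix C, let A be a symmetric real d×d matrix, and set R_j = Tr((AC)^j). Then for every n ≥ 1, E⟨ξ, Aξ⟩^n = Σ_{m=1}^{n} Σ_{k ∈ J(m,n)} 2^{n−m} ( Π_{j=1}^{m} R_{k_j} ) · Π_{j=1}^{m} (n − s_{j−1}(k) − 1)^{\underline{k_j − 1}}, where J(m,n) is the set of m-tuples k = (k_1,…,k_m) of positive integers with k_1 + ⋯ + k_m = n, s_j(k) = k_1 + ⋯ + k_j (s_0(k) = 0), and a^{\underline{b}} = a(a−1)⋯(a−b+1) is the falling factorial. -/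

import Mathlib

open MeasureTheory ProbabilityTheory Filter Matrix

noncomputable section

/-- `ξ` is a centered Gaussian random vector with covariance matrix `C`. -/
def IsCenteredGaussian {Ω : Type*} [MeasurableSpace Ω] (P : Measure Ω) {n : ℕ}
    (ξ : Ω → Fin n → ℝ) (C : Matrix (Fin n) (Fin n) ℝ) : Prop :=
  Measurable ξ ∧
    ∀ v : Fin n → ℝ,
      P.map (fun ω => v ⬝ᵥ ξ ω) = gaussianReal 0 (Real.toNNReal (v ⬝ᵥ C.mulVec v))

/-- Partial sum `s_j(k) = k_1 + ⋯ + k_j` (1-based; sums the first `j` entries). -/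
def psum {m : ℕ} (k : Fin m → ℕ) (j : ℕ) : ℕ :=
  ∑ i ∈ Finset.univ.filter (fun i : Fin m => (i : ℕ) < j), k i

/-- `J(m,n)`: `m`-tuples of positive integers summing to `n`. -/
def Jset (m n : ℕ) : Finset (Fin m → ℕ) :=
  (Finset.Nat.antidiagonalTuple m n).filter fun k => ∀ j, 1 ≤ k j

lemma aux_mgf_rec (n : ℕ) : ∀ t : ℝ, iteratedDeriv (n+2) (fun t : ℝ => Real.exp (t^2/2)) t
    = t * iteratedDeriv (n+1) (fun t : ℝ => Real.exp (t^2/2)) t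
      + (n+1) * iteratedDeriv n (fun t : ℝ => Real.exp (t^2/2)) t := by
  have hs : ContDiff ℝ ⊤ (fun t : ℝ => Real.exp (t^2/2)) := by fun_prop
  have hd : ∀ (k : ℕ) (t : ℝ), HasDerivAt (iteratedDeriv k (fun t : ℝ => Real.exp (t^2/2)))
      (iteratedDeriv (k+1) (fun t : ℝ => Real.exp (t^2/2)) t) t := by
    intro k t
    rw [iteratedDeriv_succ]
    exact (hs.differentiable_iteratedDeriv k (by exact_mod_cast WithTop.coe_lt_top _) t).hasDerivAt
  have h1 : ∀ t : ℝ, iteratedDeriv 1 (fun t : ℝ => Real.exp (t^2/2)) t = t * Real.exp (t^2/2) := by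
    intro t
    rw [iteratedDeriv_one]
    have : HasDerivAt (fun t : ℝ => Real.exp (t^2/2)) (Real.exp (t^2/2) * (2 * t / 2)) t := by
      have h0 : HasDerivAt (fun t : ℝ => t^2/2) (2 * t / 2) t := by
        simpa using (hasDerivAt_pow 2 t).div_const 2
      exact h0.exp
    rw [this.deriv]; ring
  induction n with
  | zero =>
    intro t
    have h2 : HasDerivAt (fun t => t * Real.exp (t^2/2)) _ t :=
      (hasDerivAt_id t).mul (iteratedDeriv_zero (f := fun t : ℝ => Real.exp (t^2/2)) ▸ hd 0 t)
    have h3 := hd 1 t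
    rw [show iteratedDeriv 1 (fun t : ℝ => Real.exp (t^2/2)) = fun t => t * Real.exp (t^2/2) from funext h1] at h3
    have := h3.unique h2
    simp at this ⊢
    rw [this]; ring
  | succ n ih =>
    intro t
    have h3 := hd (n+2) t
    rw [show iteratedDeriv (n+2) (fun t : ℝ => Real.exp (t^2/2)) = _ from funext ih] at h3
    have h2 := ((hasDerivAt_id t).mul (hd (n+1) t)).add ((hd n t).const_mul ((n:ℝ)+1))
    have := h3.unique h2
    rw [show n+1+2 = n+2+1 from rfl, this]
    push_cast
    simp
    ring

def gm (n : ℕ) : ℝ := ∫ x, x ^ n ∂(gaussianReal 0 1)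

lemma gm_eq (n : ℕ) : gm n = iteratedDeriv n (fun t : ℝ => Real.exp (t^2/2)) 0 := by
  have h := iteratedDeriv_mgf_zero (X := id) (μ := gaussianReal 0 1) (by simp) n
  rw [mgf_id_gaussianReal] at h
  simp only [gm]
  simp at h
  exact h.symm

lemma gm_rec (n : ℕ) : gm (n+2) = (n+1) * gm n := by
  rw [gm_eq, gm_eq, aux_mgf_rec]; simp

lemma gm_zero : gm 0 = 1 := by simp [gm]
lemma gm_one : gm 1 = 0 := by simp [gm]

lemma gm_succ (n : ℕ) : gm (n+1) = n * gm (n-1) := by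
  cases n with
  | zero => simp [gm_one]
  | succ n => simp [gm_rec]

lemma gm_int (n : ℕ) : Integrable (fun x : ℝ => x ^ n) (gaussianReal 0 1) := by
  have := integrable_pow_of_mem_interior_integrableExpSet (X := id) (μ := gaussianReal 0 1) (by simp) n
  simpa using this

abbrev gpi (d : ℕ) : Measure (Fin d → ℝ) := Measure.pi (fun _ => gaussianReal 0 1)

def EE {d : ℕ} (p : MvPolynomial (Fin d) ℝ) : ℝ := ∫ z, MvPolynomial.eval z p ∂(gpi d)

lemma eval_mono {d : ℕ} (s : Fin d →₀ ℕ) (a : ℝ) (z : Fin d → ℝ) :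
    MvPolynomial.eval z (MvPolynomial.monomial s a) = a * ∏ i, z i ^ s i := by
  rw [MvPolynomial.eval_monomial, Finsupp.prod_fintype]; simp

lemma EE_int {d : ℕ} (p : MvPolynomial (Fin d) ℝ) :
    Integrable (fun z => MvPolynomial.eval z p) (gpi d) := by
  induction p using MvPolynomial.induction_on' with
  | monomial s a =>
    simp_rw [eval_mono]
    exact (Integrable.fintype_prod (f := fun i x => x ^ s i) (fun i => gm_int (s i))).const_mul a
  | add p q hp hq => simp only [map_add]; exact hp.add hq

lemma EE_add {d : ℕ} (p q : MvPolynomial (Fin d) ℝ) : EE (p + q) = EE p + EE q := by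
  simp only [EE, map_add]; exact integral_add (EE_int p) (EE_int q)

lemma EE_C_mul {d : ℕ} (c : ℝ) (p : MvPolynomial (Fin d) ℝ) : EE (MvPolynomial.C c * p) = c * EE p := by
  simp [EE, integral_const_mul]

lemma EE_zero {d : ℕ} : EE (0 : MvPolynomial (Fin d) ℝ) = 0 := by simp [EE]
lemma EE_one {d : ℕ} : EE (1 : MvPolynomial (Fin d) ℝ) = 1 := by simp [EE]

lemma EE_sum {d : ℕ} {ι : Type*} (s : Finset ι) (f : ι → MvPolynomial (Fin d) ℝ) :
    EE (∑ i ∈ s, f i) = ∑ i ∈ s, EE (f i) := by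
  classical
  induction s using Finset.induction_on with
  | empty => simp [EE_zero]
  | insert a s ha ih => rw [Finset.sum_insert ha, Finset.sum_insert ha, EE_add, ih]

lemma EE_mono {d : ℕ} (s : Fin d →₀ ℕ) (a : ℝ) :
    EE (MvPolynomial.monomial s a) = a * ∏ i, gm (s i) := by
  simp only [EE, eval_mono, integral_const_mul]
  rw [integral_fintype_prod_eq_prod (f := fun i x => x ^ s i)]
  rfl

lemma stein {d : ℕ} (i : Fin d) (p : MvPolynomial (Fin d) ℝ) :
    EE (MvPolynomial.X i * p) = EE (MvPolynomial.pderiv i p) := by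
  induction p using MvPolynomial.induction_on' with
  | monomial s a =>
    rw [MvPolynomial.pderiv_monomial, MvPolynomial.X, MvPolynomial.monomial_mul, EE_mono, EE_mono, one_mul,
      mul_assoc]
    congr 1
    rw [← Finset.mul_prod_erase _ _ (Finset.mem_univ i), ← Finset.mul_prod_erase _ (fun j => gm ((s - Finsupp.single i 1 : Fin d →₀ ℕ) j)) (Finset.mem_univ i), ← mul_assoc]
    congr 1
    · simp [add_comm 1, gm_succ]
    · refine Finset.prod_congr rfl fun j hj => ?_
      have : i ≠ j := fun h => by simp [h] at hj
      simp [Finsupp.single_apply, this]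
  | add p q hp hq => rw [mul_add, EE_add, hp, hq, map_add, EE_add]

def qf {d : ℕ} (B : Matrix (Fin d) (Fin d) ℝ) : MvPolynomial (Fin d) ℝ :=
  ∑ i, ∑ j, MvPolynomial.C (B i j) * (MvPolynomial.X i * MvPolynomial.X j)

lemma eval_qf {d : ℕ} (B : Matrix (Fin d) (Fin d) ℝ) (z : Fin d → ℝ) :
    MvPolynomial.eval z (qf B) = z ⬝ᵥ B *ᵥ z := by
  simp only [qf, map_sum, map_mul, MvPolynomial.eval_C, MvPolynomial.eval_X, dotProduct, mulVec, Finset.mul_sum]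
  refine Finset.sum_congr rfl fun i _ => Finset.sum_congr rfl fun j _ => by ring

lemma pderiv_qf {d : ℕ} (D : Matrix (Fin d) (Fin d) ℝ) (hD : D.IsSymm) (i : Fin d) :
    MvPolynomial.pderiv i (qf D) = 2 * ∑ k, MvPolynomial.C (D i k) * MvPolynomial.X k := by
  simp only [qf, map_sum, MvPolynomial.pderiv_C_mul]
  simp only [Derivation.leibniz, MvPolynomial.pderiv_X, smul_eq_mul,
    MvPolynomial.smul_eq_C_mul, mul_add, Finset.sum_add_distrib]
  have h : ∀ a b, D a b = D b a := fun a b => hD.apply b a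
  rw [two_mul]
  congr 1
  · refine Finset.sum_congr rfl fun k _ => ?_
    rw [Finset.sum_eq_single i]
    · simp [h k i]
    · intro b _ hb; simp [Pi.single_apply, hb]
    · simp
  · rw [Finset.sum_eq_single i]
    · simp
    · intro b _ hb; simp [Pi.single_apply, hb]
    · simp

lemma EE_qf {d : ℕ} (B D : Matrix (Fin d) (Fin d) ℝ) (hB : B.IsSymm) (hD : D.IsSymm) (n : ℕ) :
    EE (qf B * qf D ^ n) = B.trace * EE (qf D ^ n) + 2 * n * EE (qf (B * D) * qf D ^ (n-1)) := by
  have h1 : qf B * qf D ^ n = ∑ i, ∑ j, MvPolynomial.C (B i j) * (MvPolynomial.X i * (MvPolynomial.X j * qf D ^ n)) := by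
    simp only [qf, Finset.sum_mul]
    refine Finset.sum_congr rfl fun i _ => Finset.sum_congr rfl fun j _ => by ring
  rw [h1]
  simp only [EE_sum, EE_C_mul, stein]
  have h2 : ∀ i j, MvPolynomial.pderiv i (MvPolynomial.X j * qf D ^ n)
      = (if i = j then qf D ^ n else 0) +
        MvPolynomial.C (2 * n : ℝ) * (∑ k, MvPolynomial.C (D i k) * (MvPolynomial.X j * MvPolynomial.X k * qf D ^ (n-1))) := by
    intro i j
    rw [Derivation.leibniz, MvPolynomial.pderiv_X, Derivation.leibniz_pow, pderiv_qf D hD, add_comm]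
    congr 1
    · rcases eq_or_ne i j with h | h
      · subst h; simp
      · simp [h, Pi.single_apply, h.symm]
    · simp only [smul_eq_mul, nsmul_eq_mul, Finset.mul_sum, map_mul, map_natCast, map_ofNat]
      refine Finset.sum_congr rfl fun k _ => by ring
  simp only [h2, EE_add, EE_C_mul, EE_sum, mul_add, Finset.sum_add_distrib]
  congr 1
  · rw [trace, Finset.sum_mul]
    refine Finset.sum_congr rfl fun i _ => ?_
    rw [Finset.sum_eq_single i]
    · simp
    · intro b _ hb; simp [hb.symm, EE_zero]
    · simp
  · have h3 : qf (B * D) * qf D ^ (n-1) = ∑ j, ∑ k, ∑ i, MvPolynomial.C (B i j * D i k) * (MvPolynomial.X j * MvPolynomial.X k * qf D ^ (n-1)) := by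
      simp only [qf, Finset.sum_mul, Matrix.mul_apply, map_sum]
      refine Finset.sum_congr rfl fun j _ => Finset.sum_congr rfl fun k _ => Finset.sum_congr rfl fun i _ => ?_
      rw [hB.apply]; ring
    rw [h3]
    simp only [EE_sum, EE_C_mul, Finset.mul_sum]
    rw [Finset.sum_comm]
    refine Finset.sum_congr rfl fun j _ => ?_
    rw [Finset.sum_comm]
    refine Finset.sum_congr rfl fun k _ => Finset.sum_congr rfl fun i _ => by ring

lemma EE_W {d : ℕ} (D : Matrix (Fin d) (Fin d) ℝ) (hD : D.IsSymm) (n : ℕ) : ∀ k : ℕ,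
    EE (qf (D^(k+1)) * qf D ^ n) = ∑ a ∈ Finset.range (n+1),
      2^a * (n.descFactorial a : ℝ) * trace (D^(k+1+a)) * EE (qf D ^ (n-a)) := by
  induction n with
  | zero => intro k; rw [EE_qf _ _ (hD.pow _) hD]; simp
  | succ n ih =>
    intro k
    rw [EE_qf _ _ (hD.pow _) hD, ← pow_succ, Nat.add_sub_cancel, ih, Finset.sum_range_succ' _ (n+1), add_comm, Finset.mul_sum]
    congr 1
    · refine Finset.sum_congr rfl fun a _ => ?_
      rw [Nat.succ_descFactorial_succ, show k+1+(a+1) = k+1+1+a by ring, Nat.add_sub_add_right]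
      push_cast; ring
    · simp

lemma EE_rec {d : ℕ} (D : Matrix (Fin d) (Fin d) ℝ) (hD : D.IsSymm) (n : ℕ) :
    EE (qf D ^ (n+1)) = ∑ a ∈ Finset.range (n+1),
      2^a * (n.descFactorial a : ℝ) * trace (D^(a+1)) * EE (qf D ^ (n-a)) := by
  have := EE_W D hD n 0
  rw [zero_add, pow_one, ← pow_succ'] at this
  rw [this]
  refine Finset.sum_congr rfl fun a _ => by rw [add_comm 1 a]

/-! combinatorics -/

def HH (R : ℕ → ℝ) (m n : ℕ) : ℝ := ∑ k ∈ Jset m n,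
        (2 : ℝ) ^ (n - m) * (∏ j : Fin m, R (k j)) *
          ∏ j : Fin m, ((n - psum k (j : ℕ) - 1).descFactorial (k j - 1) : ℝ)

lemma mem_Jset {m n : ℕ} (k : Fin m → ℕ) : k ∈ Jset m n ↔ ∑ i, k i = n ∧ ∀ j, 1 ≤ k j := by
  simp [Jset, Finset.Nat.mem_antidiagonalTuple]

lemma Jset_le {m n : ℕ} {k : Fin m → ℕ} (h : k ∈ Jset m n) : m ≤ n := by
  rw [mem_Jset] at h
  rw [← h.1]
  calc m = ∑ i : Fin m, 1 := by simp
    _ ≤ _ := Finset.sum_le_sum fun i _ => h.2 i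

lemma HH_zero_of_lt (R : ℕ → ℝ) {m n : ℕ} (h : n < m) : HH R m n = 0 := by
  rw [HH, Finset.sum_eq_zero]
  intro k hk
  exact absurd (Jset_le hk) (by omega)

lemma psum_cons {m : ℕ} (a : ℕ) (k : Fin m → ℕ) (j : ℕ) :
    psum (Fin.cons a k : Fin (m+1) → ℕ) (j+1) = a + psum k j := by
  simp [psum, Finset.sum_filter, Fin.sum_univ_succ]

lemma sum_Jset_succ (m n : ℕ) (F : (Fin (m+1) → ℕ) → ℝ) :
    ∑ k ∈ Jset (m+1) (n+1), F k = ∑ a ∈ Finset.range (n+1), ∑ k ∈ Jset m (n-a), F (Fin.cons (a+1) k) := by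
  rw [Finset.sum_sigma']
  symm
  refine Finset.sum_bij' (fun x _ => Fin.cons (x.1+1) x.2) (fun k _ => ⟨k 0 - 1, Fin.tail k⟩) ?_ ?_ ?_ ?_ ?_
  · rintro ⟨a, k⟩ h
    simp only [Finset.mem_sigma, Finset.mem_range, mem_Jset] at h ⊢
    refine ⟨?_, ?_⟩
    · simp [Fin.sum_univ_succ]; omega
    · intro j; refine Fin.cases ?_ ?_ j
      · simp
      · intro j; simpa using h.2.2 j
  · intro k h
    simp only [Finset.mem_sigma, Finset.mem_range, mem_Jset] at h ⊢
    have h0 := h.2 0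
    rw [Fin.sum_univ_succ] at h
    refine ⟨by omega, ?_, fun j => h.2 _⟩
    simp only [Fin.tail]; omega
  · rintro ⟨a, k⟩ h; simp
  · intro k h
    rw [mem_Jset] at h
    have h0 := h.2 0
    simp only [Nat.sub_add_cancel h0]
    exact Fin.cons_self_tail k
  · intro x h; rfl

lemma HH_succ (R : ℕ → ℝ) (m n : ℕ) : HH R (m+1) (n+1) = ∑ a ∈ Finset.range (n+1),
    2^a * (n.descFactorial a : ℝ) * R (a+1) * HH R m (n-a) := by
  rw [HH, sum_Jset_succ]
  refine Finset.sum_congr rfl fun a ha => ?_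
  rw [HH, Finset.mul_sum]
  refine Finset.sum_congr rfl fun k hk => ?_
  have hm := Jset_le hk
  have ha' : a ≤ n := by simp at ha; omega
  rw [Fin.prod_univ_succ, Fin.prod_univ_succ]
  simp only [Fin.cons_zero, Fin.cons_succ, Fin.val_zero, Fin.val_succ, psum_cons]
  rw [show n + 1 - (m+1) = a + (n - a - m) by omega, pow_add]
  have h0 : psum (Fin.cons (a+1) k : Fin (m+1) → ℕ) 0 = 0 := by simp [psum]
  rw [h0]
  have h1 : ∀ j : Fin m, n + 1 - (a + 1 + psum k j) - 1 = n - a - psum k j - 1 := fun j => by omega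
  simp only [h1, Nat.add_sub_cancel, Nat.sub_zero]
  ring

lemma HH_zero_succ (R : ℕ → ℝ) (n : ℕ) : HH R 0 (n+1) = 0 := by
  rw [HH, Finset.sum_eq_zero]
  intro k hk
  rw [mem_Jset] at hk
  simp at hk

lemma comb (R M : ℕ → ℝ) (h0 : M 0 = 1) (hM : ∀ n, M (n+1) = ∑ a ∈ Finset.range (n+1),
    2^a * (n.descFactorial a : ℝ) * R (a+1) * M (n-a)) (n : ℕ) :
    M n = ∑ m ∈ Finset.range (n+1), HH R m n := by
  induction n using Nat.strong_induction_on with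
  | _ n ih =>
  cases n with
  | zero => simp [h0, HH, Jset]
  | succ n =>
    rw [Finset.sum_range_succ', HH_zero_succ, add_zero, hM]
    simp only [HH_succ]
    rw [Finset.sum_comm]
    refine Finset.sum_congr rfl fun a ha => ?_
    rw [← Finset.mul_sum, ih (n-a) (by omega)]
    congr 1
    refine Finset.sum_subset (by intro x; simp; omega) fun x _ hx => HH_zero_of_lt R (by simp at hx; omega)

/-! law -/
open scoped MatrixOrder in
lemma exists_factor {d : ℕ} (C : Matrix (Fin d) (Fin d) ℝ) (hC : C.PosSemidef) :
    ∃ S : Matrix (Fin d) (Fin d) ℝ, C = S * Sᵀ := by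
  obtain ⟨B, hB⟩ := CStarAlgebra.nonneg_iff_eq_star_mul_self.1 hC.nonneg
  refine ⟨Bᵀ, ?_⟩
  rw [hB, Matrix.transpose_transpose, Matrix.star_eq_conjTranspose, Matrix.conjTranspose_eq_transpose_of_trivial]

lemma law_eq {Ω : Type*} [MeasurableSpace Ω] (P : Measure Ω) [IsProbabilityMeasure P]
    {d : ℕ} (ξ : Ω → Fin d → ℝ) (S : Matrix (Fin d) (Fin d) ℝ)
    (hξ : IsCenteredGaussian P ξ (S * Sᵀ)) :
    P.map ξ = (gpi d).map (fun z => S *ᵥ z) := by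
  have hS : Measurable (fun z : Fin d → ℝ => S *ᵥ z) := by
    apply Continuous.measurable; fun_prop
  have := Measure.isProbabilityMeasure_map (μ := P) hξ.1.aemeasurable
  have := Measure.isProbabilityMeasure_map (μ := gpi d) hS.aemeasurable
  apply Measure.ext_of_charFunDual
  ext L
  obtain ⟨v, hv⟩ : ∃ v : Fin d → ℝ, ∀ x, L x = v ⬝ᵥ x := by
    refine ⟨fun i => L (Pi.single i 1), fun x => ?_⟩
    conv_lhs => rw [← Finset.univ_sum_single x]
    rw [map_sum]
    refine Finset.sum_congr rfl fun i _ => ?_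
    rw [show (Pi.single i (x i) : Fin d → ℝ) = x i • Pi.single i 1 by
      rw [← Pi.single_smul]; simp]
    simp [mul_comm]
  rw [charFunDual_apply, charFunDual_apply, integral_map hξ.1.aemeasurable (by fun_prop), integral_map hS.aemeasurable (by fun_prop)]
  simp only [hv]
  have hm : Measurable (fun ω => v ⬝ᵥ ξ ω) := by
    have := hξ.1
    have hc : Measurable (fun x : Fin d → ℝ => v ⬝ᵥ x) := by apply Continuous.measurable; fun_prop
    exact hc.comp this
  have h1 : ∫ ω, Complex.exp ((v ⬝ᵥ ξ ω : ℝ) * Complex.I) ∂P = charFun (P.map (fun ω => v ⬝ᵥ ξ ω)) 1 := by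
    rw [charFun_apply_real, integral_map hm.aemeasurable (by fun_prop)]
    simp
  rw [h1, hξ.2, charFun_gaussianReal]
  have h2 : ∀ z, v ⬝ᵥ S *ᵥ z = ∑ i, (v ᵥ* S) i * z i := fun z => by rw [Matrix.dotProduct_mulVec]; rfl
  have h3 : v ⬝ᵥ (S * Sᵀ) *ᵥ v = ∑ i, (v ᵥ* S) i ^ 2 := by
    rw [← Matrix.mulVec_mulVec, Matrix.dotProduct_mulVec, Matrix.mulVec_transpose, dotProduct]
    simp [sq]
  rw [h3, Real.coe_toNNReal _ (by positivity)]
  simp_rw [h2, Complex.ofReal_sum, Finset.sum_mul, Complex.exp_sum]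
  rw [integral_fintype_prod_eq_prod (f := fun i x => Complex.exp (((v ᵥ* S) i * x : ℝ) * Complex.I))]
  simp_rw [Complex.ofReal_mul, ← charFun_apply_real, charFun_gaussianReal, ← Complex.exp_sum]
  congr 1
  simp [Finset.sum_div, Finset.sum_neg_distrib]

lemma trace_factor {d : ℕ} (A S : Matrix (Fin d) (Fin d) ℝ) (k : ℕ) :
    trace ((Sᵀ * A * S) ^ (k+1)) = trace ((A * (S * Sᵀ)) ^ (k+1)) := by
  have h : ∀ k, (Sᵀ * A * S) ^ (k+1) = Sᵀ * ((A * (S * Sᵀ)) ^ k * (A * S)) := by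
    intro k
    induction k with
    | zero => simp [Matrix.mul_assoc]
    | succ k ih => rw [pow_succ, ih, pow_succ _ k]; simp only [Matrix.mul_assoc]
  rw [h, Matrix.trace_mul_comm, pow_succ]
  simp only [Matrix.mul_assoc]

theorem stmt13 {Ω : Type*} [MeasurableSpace Ω] (P : Measure Ω) [IsProbabilityMeasure P]
    {d : ℕ} (ξ : Ω → Fin d → ℝ) (C A : Matrix (Fin d) (Fin d) ℝ)
    (hC : C.PosSemidef) (hA : A.IsSymm)
    (hξ : IsCenteredGaussian P ξ C)
    (hint : ∀ k : ℕ, Integrable (fun ω => (ξ ω ⬝ᵥ A.mulVec (ξ ω)) ^ k) P)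
    (n : ℕ) (hn : 1 ≤ n) :
    (∫ ω, (ξ ω ⬝ᵥ A.mulVec (ξ ω)) ^ n ∂P) =
      ∑ m ∈ Finset.Icc 1 n, ∑ k ∈ Jset m n,
        (2 : ℝ) ^ (n - m) * (∏ j : Fin m, Matrix.trace ((A * C) ^ (k j))) *
          ∏ j : Fin m, ((n - psum k (j : ℕ) - 1).descFactorial (k j - 1) : ℝ) := by
  obtain ⟨S, rfl⟩ := exists_factor C hC
  have hD : (Sᵀ * A * S).IsSymm := by
    rw [Matrix.IsSymm, Matrix.transpose_mul, Matrix.transpose_mul, Matrix.transpose_transpose, hA.eq, Matrix.mul_assoc]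
  have hS : Measurable (fun z : Fin d → ℝ => S *ᵥ z) := by
    apply Continuous.measurable; fun_prop
  have hq : ∀ n : ℕ, Continuous (fun x : Fin d → ℝ => (x ⬝ᵥ A *ᵥ x) ^ n) := fun n => by fun_prop
  have key : ∫ ω, (ξ ω ⬝ᵥ A.mulVec (ξ ω)) ^ n ∂P = EE (qf (Sᵀ * A * S) ^ n) := by
    rw [← integral_map (f := fun x : Fin d → ℝ => (x ⬝ᵥ A *ᵥ x) ^ n) hξ.1.aemeasurable
      (hq n).aestronglyMeasurable, law_eq P ξ S hξ,
      integral_map hS.aemeasurable (hq n).aestronglyMeasurable, EE]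
    simp only [map_pow, eval_qf]
    congr 1
    ext z
    congr 1
    rw [← Matrix.mulVec_mulVec, ← Matrix.mulVec_mulVec, Matrix.dotProduct_mulVec z, Matrix.vecMul_transpose]
  rw [key, comb (fun j => trace ((A * (S * Sᵀ)) ^ j)) (fun n => EE (qf (Sᵀ * A * S) ^ n)) (by simp [EE_one]) ?_ n]
  · obtain ⟨n, rfl⟩ := Nat.exists_eq_add_of_le' hn
    rw [Finset.sum_range_succ', HH_zero_succ, add_zero]
    rw [Finset.range_eq_Ico, Finset.sum_Ico_add' (fun m => HH _ m (n+1)) 0 (n+1) 1]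
    rfl
  · intro n
    simp only [← trace_factor]
    exact EE_rec _ hD n
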